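/- arXiv:1805.09114 — 3 statements merged into one kernel-verified Lean document; each statement's English description precedes it below -/
import Mathlib

section
/- (Interpolation, α → 0.) Let h ∈ Σ_n, g ∈ Σ_m, M ∈ ℝ^{n×m} a matrix with nonnegative entries, C₁ ∈ ℝ^{n×n}, C₂ ∈ ℝ^{m×m} and q ≥ 1. Define for each α ∈ [0,1] the value FGW_{q,α} = min_{π ∈ Π(h,g)} E_q(M,C₁,C₂,π). Then the limit of FGW_{q,α} as α → 0 equals the Wasserstein value W_q^q = min_{π ∈ Π(h,g)} H_q(M,π). -/
open Finset

/-- `h` is a positive histogram (element of the open simplex Σₙ). -/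
def IsSimplex {n : ℕ} (h : Fin n → ℝ) : Prop :=
  (∀ i, 0 < h i) ∧ ∑ i, h i = 1

/-- The set `Π(h,g)` of admissible couplings between histograms `h` and `g`. -/
def Couplings {n m : ℕ} (h : Fin n → ℝ) (g : Fin m → ℝ) :
    Set (Matrix (Fin n) (Fin m) ℝ) :=
  {π | (∀ i j, 0 ≤ π i j) ∧ (∀ i, ∑ j, π i j = h i) ∧ (∀ j, ∑ i, π i j = g j)}

/-- Wasserstein loss `H_q(M, π) = Σ_{i,j} M_{ij}^q π_{ij}`. -/
noncomputable def Hloss {n m : ℕ} (q : ℝ) (M π : Matrix (Fin n) (Fin m) ℝ) : ℝ :=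
  ∑ i, ∑ j, M i j ^ q * π i j

/-- Gromov–Wasserstein loss `J_q(C₁, C₂, π) = Σ_{i,j,k,l} |C₁(i,k)-C₂(j,l)|^q π_{ij} π_{kl}`. -/
noncomputable def Jloss {n m : ℕ} (q : ℝ) (C1 : Matrix (Fin n) (Fin n) ℝ)
    (C2 : Matrix (Fin m) (Fin m) ℝ) (π : Matrix (Fin n) (Fin m) ℝ) : ℝ :=
  ∑ i, ∑ j, ∑ k, ∑ l, |C1 i k - C2 j l| ^ q * π i j * π k l

/-- FGW loss `E_q = (1-α) H_q + α J_q`. -/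
noncomputable def Eloss {n m : ℕ} (q α : ℝ) (M : Matrix (Fin n) (Fin m) ℝ)
    (C1 : Matrix (Fin n) (Fin n) ℝ) (C2 : Matrix (Fin m) (Fin m) ℝ)
    (π : Matrix (Fin n) (Fin m) ℝ) : ℝ :=
  (1 - α) * Hloss q M π + α * Jloss q C1 C2 π

open Filter Topology

/-!
`Eloss` is jointly continuous in `α` and `π`, and the coupling set is compact, so its minimum over
couplings is a continuous function of `α` on all of `ℝ`; at `α = 0` it is the Wasserstein value.
-/

section Couplings

variable {n m : ℕ} {h : Fin n → ℝ} {g : Fin m → ℝ}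

theorem vecMulVec_mem_couplings (hh : ∀ i, 0 ≤ h i) (hg : ∀ j, 0 ≤ g j)
    (hh_sum : ∑ i, h i = 1) (hg_sum : ∑ j, g j = 1) :
    Matrix.vecMulVec h g ∈ Couplings h g := by
  refine ⟨fun i j => mul_nonneg (hh i) (hg j), fun i => ?_, fun j => ?_⟩
  · simp only [Matrix.vecMulVec_apply, ← mul_sum, hg_sum, mul_one]
  · simp only [Matrix.vecMulVec_apply, ← sum_mul, hh_sum, one_mul]

theorem IsSimplex.couplings_nonempty (hh : IsSimplex h) (hg : IsSimplex g) :
    (Couplings h g).Nonempty :=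
  ⟨_, vecMulVec_mem_couplings (fun i => (hh.1 i).le) (fun j => (hg.1 j).le) hh.2 hg.2⟩

theorem le_of_mem_couplings {π : Matrix (Fin n) (Fin m) ℝ} (hπ : π ∈ Couplings h g)
    (i : Fin n) (j : Fin m) : π i j ≤ h i :=
  (single_le_sum (fun l _ => hπ.1 i l) (mem_univ j)).trans_eq (hπ.2.1 i)

theorem isClosed_couplings (h : Fin n → ℝ) (g : Fin m → ℝ) : IsClosed (Couplings h g) := by
  simp only [Couplings, Set.ofPred_and, Set.ofPred_forall]
  refine .inter ?_ (.inter ?_ ?_)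
  · exact isClosed_iInter fun i => isClosed_iInter fun j =>
      isClosed_le continuous_const (by fun_prop)
  · exact isClosed_iInter fun i => isClosed_eq (by fun_prop) continuous_const
  · exact isClosed_iInter fun j => isClosed_eq (by fun_prop) continuous_const

theorem isCompact_couplings (h : Fin n → ℝ) (g : Fin m → ℝ) : IsCompact (Couplings h g) := by
  have isCompact_box :
      IsCompact {π : Matrix (Fin n) (Fin m) ℝ | ∀ i j, π i j ∈ Set.Icc 0 (h i)} :=
    isCompact_pi_infinite fun i => isCompact_pi_infinite fun _ => isCompact_Icc
  exact isCompact_box.of_isClosed_subset (isClosed_couplings h g) fun π hπ i j =>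
    ⟨hπ.1 i j, le_of_mem_couplings hπ i j⟩

end Couplings

section Loss

variable {n m : ℕ} (q : ℝ) (M : Matrix (Fin n) (Fin m) ℝ)
  (C1 : Matrix (Fin n) (Fin n) ℝ) (C2 : Matrix (Fin m) (Fin m) ℝ)

theorem continuous_Hloss : Continuous (Hloss q M) := by
  unfold Hloss
  fun_prop

theorem continuous_Jloss : Continuous (Jloss q C1 C2) := by
  unfold Jloss
  fun_prop

theorem continuous_uncurry_Eloss : Continuous ↿(fun α => Eloss q α M C1 C2) := by
  have hH := continuous_Hloss q M
  have hJ := continuous_Jloss q C1 C2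
  simp only [Function.HasUncurry.uncurry, id, Eloss]
  fun_prop

theorem Eloss_zero : Eloss q 0 M C1 C2 = Hloss q M := by
  funext π
  simp only [Eloss, sub_zero, one_mul, zero_mul, add_zero]

theorem isLeast_sInf_Eloss (α : ℝ) {h : Fin n → ℝ} {g : Fin m → ℝ}
    (hne : (Couplings h g).Nonempty) :
    IsLeast (Eloss q α M C1 C2 '' Couplings h g) (sInf (Eloss q α M C1 C2 '' Couplings h g)) :=
  have continuous_Eloss : Continuous (Eloss q α M C1 C2) :=
    (continuous_uncurry_Eloss q M C1 C2).comp (.prodMk_right α)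
  ((isCompact_couplings h g).image continuous_Eloss).isLeast_sInf (hne.image _)

theorem continuous_sInf_Eloss (h : Fin n → ℝ) (g : Fin m → ℝ) :
    Continuous fun α => sInf (Eloss q α M C1 C2 '' Couplings h g) :=
  (isCompact_couplings h g).continuous_sInf (continuous_uncurry_Eloss q M C1 C2)

end Loss

theorem fgw_tendsto_wasserstein_general {n m : ℕ} {h : Fin n → ℝ} {g : Fin m → ℝ}
    {M : Matrix (Fin n) (Fin m) ℝ} {C1 : Matrix (Fin n) (Fin n) ℝ}
    {C2 : Matrix (Fin m) (Fin m) ℝ} {q : ℝ} {fgw : ℝ → ℝ} {w : ℝ}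
    (hfgw : ∀ α, IsLeast (Eloss q α M C1 C2 '' Couplings h g) (fgw α))
    (hw : IsLeast (Hloss q M '' Couplings h g) w) :
    Tendsto fgw (𝓝 0) (𝓝 w) := by
  have fgw_continuous : Continuous fgw := by
    simpa only [(hfgw _).csInf_eq] using continuous_sInf_Eloss q M C1 C2 h g
  have fgw_zero : fgw 0 = w := (Eloss_zero q M C1 C2 ▸ hfgw 0).unique hw
  exact fgw_zero ▸ fgw_continuous.tendsto 0

/-- interpolation, `α → 0`: the FGW value tends to the Wasserstein
value `W_q^q` as the trade-off parameter `α ∈ [0,1]` tends to `0`. -/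
theorem fgw_tendsto_wasserstein {n m : ℕ} (hn : 1 ≤ n) (hm : 1 ≤ m)
    (h : Fin n → ℝ) (g : Fin m → ℝ) (hh : IsSimplex h) (hg : IsSimplex g)
    (M : Matrix (Fin n) (Fin m) ℝ) (hM : ∀ i j, 0 ≤ M i j)
    (C1 : Matrix (Fin n) (Fin n) ℝ) (C2 : Matrix (Fin m) (Fin m) ℝ)
    (q : ℝ) (hq : 1 ≤ q) :
    Tendsto (fun α : ℝ => sInf (Eloss q α M C1 C2 '' Couplings h g))
      (𝓝[Set.Icc (0 : ℝ) 1] 0)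
      (𝓝 (sInf (Hloss q M '' Couplings h g))) := by
  have isLeast_fgw (α : ℝ) := isLeast_sInf_Eloss q M C1 C2 α (hh.couplings_nonempty hg)
  exact (fgw_tendsto_wasserstein_general isLeast_fgw
    (Eloss_zero q M C1 C2 ▸ isLeast_fgw 0)).mono_left nhdsWithin_le_nhds
end

section
/- (Mixed-structure comparison bound.) Let (Ω_f, d) be a metric space, h ∈ Σ_n, g ∈ Σ_m positive histograms, a₁,…,a_n ∈ Ω_f, b₁,…,b_m ∈ Ω_f, and C₁ ∈ ℝ^{n×n}, C₂ ∈ ℝ^{m×m}. Define Ĉ₁(i,k) = ½·C₁(i,k) + ½·d(a_i,a_k) and Ĉ₂(j,l) = ½·C₂(j,l) + ½·d(b_j,b_l). Then for every natural number n₀ ≥ 1 and every π ∈ Π(h,g): J_{n₀}(Ĉ₁,Ĉ₂,π) ≤ ½·J_{n₀}(C₁,C₂,π) + M_{n₀}(π), where J_{n₀}(C₁,C₂,π) = Σ_{i,j,k,l} |C₁(i,k)−C₂(j,l)|^{n₀}·π_{ij}·π_{kl} and M_{n₀}(π) = ½·Σ_{i,j,k,l} (d(a_i,b_j) + d(a_k,b_l))^{n₀}·π_{ij}·π_{kl}.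 -/
open Finset

/-!
The loss `J` of a plan is jointly convex in the pair of structures `(C₁, C₂)`, since it averages a
convex function of `C₁(i,k) - C₂(j,l)` against the nonnegative weights `π(i,j) π(k,l)`. Hence the
loss of the mixture is at most the mixture of the loss of `(C₁, C₂)` and the loss of the two metric
structures, and `|d(aᵢ,aₖ) - d(bⱼ,bₗ)| ≤ d(aᵢ,bⱼ) + d(aₖ,bₗ)` bounds the latter.
-/

lemma convexOn_univ_comp_norm {E : Type*} [SeminormedAddCommGroup E] [NormedSpace ℝ E] {φ : ℝ → ℝ}
    (hconv : ConvexOn ℝ (Set.Ici 0) φ) (hmono : MonotoneOn φ (Set.Ici 0)) :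
    ConvexOn ℝ Set.univ fun x : E ↦ φ ‖x‖ := by
  refine ⟨convex_univ, fun x _ y _ s t hs ht hst ↦ ?_⟩
  have hx : ‖x‖ ∈ Set.Ici (0 : ℝ) := norm_nonneg x
  have hy : ‖y‖ ∈ Set.Ici (0 : ℝ) := norm_nonneg y
  calc φ ‖s • x + t • y‖
      ≤ φ (s • ‖x‖ + t • ‖y‖) :=
        hmono (norm_nonneg _) (convex_Ici 0 hx hy hs ht hst)
          (convexOn_univ_norm.2 trivial trivial hs ht hst)
    _ ≤ s • φ ‖x‖ + t • φ ‖y‖ := hconv.2 hx hy hs ht hst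

/-- The energy `⟨L ⊗ π, π⟩ = ∑ L(i,j,k,l) π(i,j) π(k,l)` of a transport plan `π` under a four-index
cost `L`. The Gromov–Wasserstein loss `J` and, up to the factor `1/2`, the functional `M` bounding
the metric part are of this form and differ only in `L`. -/
def planEnergy {ι κ : Type*} [Fintype ι] [Fintype κ] (L : ι → κ → ι → κ → ℝ)
    (π : Matrix ι κ ℝ) : ℝ :=
  ∑ i, ∑ j, ∑ k, ∑ l, L i j k l * π i j * π k l

section PlanEnergy

variable {ι κ : Type*} [Fintype ι] [Fintype κ] {L L' : ι → κ → ι → κ → ℝ} {π : Matrix ι κ ℝ}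

lemma planEnergy_mono (hπ : ∀ i j, 0 ≤ π i j) (hL : ∀ i j k l, L i j k l ≤ L' i j k l) :
    planEnergy L π ≤ planEnergy L' π :=
  sum_le_sum fun i _ ↦ sum_le_sum fun j _ ↦ sum_le_sum fun k _ ↦ sum_le_sum fun l _ ↦
    mul_le_mul_of_nonneg_right (mul_le_mul_of_nonneg_right (hL i j k l) (hπ i j)) (hπ k l)

lemma planEnergy_mul_add_mul (s t : ℝ) :
    planEnergy (fun i j k l ↦ s * L i j k l + t * L' i j k l) π =
      s * planEnergy L π + t * planEnergy L' π := by
  simp only [planEnergy, add_mul, sum_add_distrib, mul_sum, mul_assoc]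

lemma planEnergy_comp_smul_add_smul_sub_le {E : Type*} [AddCommGroup E] [Module ℝ E] {c : E → ℝ}
    (hc : ConvexOn ℝ Set.univ c) {s t : ℝ} (hs : 0 ≤ s) (ht : 0 ≤ t) (hst : s + t = 1)
    (C₁ D₁ : Matrix ι ι E) (C₂ D₂ : Matrix κ κ E) (hπ : ∀ i j, 0 ≤ π i j) :
    planEnergy (fun i j k l ↦ c (s • C₁ i k + t • D₁ i k - (s • C₂ j l + t • D₂ j l))) π ≤
      s * planEnergy (fun i j k l ↦ c (C₁ i k - C₂ j l)) π +
        t * planEnergy (fun i j k l ↦ c (D₁ i k - D₂ j l)) π := by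
  rw [← planEnergy_mul_add_mul]
  refine planEnergy_mono hπ fun i j k l ↦ ?_
  calc c (s • C₁ i k + t • D₁ i k - (s • C₂ j l + t • D₂ j l))
      = c (s • (C₁ i k - C₂ j l) + t • (D₁ i k - D₂ j l)) := by congr 1; module
    _ ≤ s * c (C₁ i k - C₂ j l) + t * c (D₁ i k - D₂ j l) :=
      hc.2 trivial trivial hs ht hst

lemma planEnergy_abs_dist_sub_dist_le {Ω : Type*} [PseudoMetricSpace Ω] {φ : ℝ → ℝ}
    (hφ : MonotoneOn φ (Set.Ici 0)) (a : ι → Ω) (b : κ → Ω) (hπ : ∀ i j, 0 ≤ π i j) :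
    planEnergy (fun i j k l ↦ φ |dist (a i) (a k) - dist (b j) (b l)|) π ≤
      planEnergy (fun i j k l ↦ φ (dist (a i) (b j) + dist (a k) (b l))) π :=
  planEnergy_mono hπ fun _ _ _ _ ↦
    hφ (Set.mem_Ici.2 (abs_nonneg _)) (Set.mem_Ici.2 (add_nonneg dist_nonneg dist_nonneg))
      (dist_dist_dist_le _ _ _ _)

end PlanEnergy

theorem mixed_structure_bound_general {Ω ι κ : Type*} [PseudoMetricSpace Ω] [Fintype ι] [Fintype κ]
    {φ : ℝ → ℝ} (hconv : ConvexOn ℝ (Set.Ici 0) φ) (hmono : MonotoneOn φ (Set.Ici 0))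
    {s t : ℝ} (hs : 0 ≤ s) (ht : 0 ≤ t) (hst : s + t = 1) (a : ι → Ω) (b : κ → Ω)
    (C₁ : Matrix ι ι ℝ) (C₂ : Matrix κ κ ℝ) {π : Matrix ι κ ℝ} (hπ : ∀ i j, 0 ≤ π i j) :
    planEnergy (fun i j k l ↦ φ |s * C₁ i k + t * dist (a i) (a k) -
        (s * C₂ j l + t * dist (b j) (b l))|) π ≤
      s * planEnergy (fun i j k l ↦ φ |C₁ i k - C₂ j l|) π +
        t * planEnergy (fun i j k l ↦ φ (dist (a i) (b j) + dist (a k) (b l))) π :=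
  calc planEnergy (fun i j k l ↦ φ |s * C₁ i k + t * dist (a i) (a k) -
        (s * C₂ j l + t * dist (b j) (b l))|) π
      ≤ s * planEnergy (fun i j k l ↦ φ |C₁ i k - C₂ j l|) π +
          t * planEnergy (fun i j k l ↦ φ |dist (a i) (a k) - dist (b j) (b l)|) π :=
        planEnergy_comp_smul_add_smul_sub_le (convexOn_univ_comp_norm hconv hmono) hs ht hst
          C₁ (fun i k ↦ dist (a i) (a k)) C₂ (fun j l ↦ dist (b j) (b l)) hπ
    _ ≤ s * planEnergy (fun i j k l ↦ φ |C₁ i k - C₂ j l|) π +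
          t * planEnergy (fun i j k l ↦ φ (dist (a i) (b j) + dist (a k) (b l))) π := by
        gcongr
        exact planEnergy_abs_dist_sub_dist_le hmono a b hπ

/-- mixed-structure comparison bound: with
`Ĉ₁(i,k) = ½C₁(i,k) + ½d(aᵢ,aₖ)` and `Ĉ₂(j,l) = ½C₂(j,l) + ½d(bⱼ,bₗ)`, for every
`n₀ ≥ 1` and every admissible coupling `π`,
`J_{n₀}(Ĉ₁,Ĉ₂,π) ≤ ½ J_{n₀}(C₁,C₂,π) + M_{n₀}(π)`. -/
theorem mixed_structure_bound {Ωf : Type*} [MetricSpace Ωf] {n m : ℕ}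
    (h : Fin n → ℝ) (g : Fin m → ℝ) (hh : IsSimplex h) (hg : IsSimplex g)
    (a : Fin n → Ωf) (b : Fin m → Ωf)
    (C1 : Matrix (Fin n) (Fin n) ℝ) (C2 : Matrix (Fin m) (Fin m) ℝ)
    (n₀ : ℕ) (hn₀ : 1 ≤ n₀)
    (π : Matrix (Fin n) (Fin m) ℝ) (hπ : π ∈ Couplings h g) :
    (∑ i, ∑ j, ∑ k, ∑ l,
        |((1 / 2 : ℝ) * C1 i k + (1 / 2) * dist (a i) (a k)) -
          ((1 / 2 : ℝ) * C2 j l + (1 / 2) * dist (b j) (b l))| ^ n₀ * π i j * π k l) ≤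
      (1 / 2 : ℝ) *
        (∑ i, ∑ j, ∑ k, ∑ l, |C1 i k - C2 j l| ^ n₀ * π i j * π k l) +
      (1 / 2 : ℝ) *
        (∑ i, ∑ j, ∑ k, ∑ l,
          (dist (a i) (b j) + dist (a k) (b l)) ^ n₀ * π i j * π k l) :=
  mixed_structure_bound_general (convexOn_pow n₀) pow_left_monotoneOn (by positivity)
    (by positivity) (add_halves 1) a b C1 C2 hπ.1
end

section
/- (Quadratic simplification of the Gromov term for q = 2.) Let h ∈ Σ_n, g ∈ Σ_m be positive histograms, C₁ ∈ ℝ^{n×n} and C₂ ∈ ℝ^{m×m} real matrices, and π ∈ Π(h,g). Then Σ_{i,j,k,l} (C₁(i,k) − C₂(j,l))²·π_{ij}·π_{kl} = Σ_{i,k} C₁(i,k)²·h_i·h_k + Σ_{j,l} C₂(j,l)²·g_j·g_l − 2·Σ_{i,j,k,l} C₁(i,k)·C₂(j,l)·π_{ij}·π_{kl}; in matrix form the last term equals 2·⟨C₁ π C₂ᵀ, π⟩, so the quartic tensor contraction reduces to a quantity computable in O(n²m + nm²) operations. -/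
open Finset

/-!
Expanding `(a - b) ^ 2 = a ^ 2 + b ^ 2 - 2 * a * b`, each squared term depends on only one of the
index pairs `(i, k)` and `(j, l)`, so summing over the other pair replaces the couplings by their
marginals. The mixed coefficient is a product of a function of `(i, k)` and one of `(j, l)`, so its
sum over `(k, l)` is an entry of a matrix product. The two copies of the coupling play independent
roles: the identity holds for a pair `π`, `ρ`, as in the co-optimal transport functional.
-/

section QuarticSums

variable {ι ι' κ κ' R : Type*} [Fintype ι'] [Fintype κ']

theorem sum_mul_mul_mul_eq_mul_mul_transpose_apply_mul [CommSemiring R]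
    (A : Matrix ι ι' R) (B : Matrix κ κ' R) (ρ : Matrix ι' κ' R) (i : ι) (j : κ) (c : R) :
    ∑ k, ∑ l, A i k * B j l * c * ρ k l = (A * ρ * B.transpose) i j * c := by
  simp only [Matrix.mul_apply, Matrix.transpose_apply, sum_mul]
  rw [sum_comm]
  exact sum_congr rfl fun l _ => sum_congr rfl fun k _ => by ring

variable [Fintype ι] [Fintype κ]

theorem sum_mul_mul_eq_sum_mul_row_sums [NonUnitalNonAssocSemiring R]
    (f : ι → ι' → R) (π : Matrix ι κ R) (ρ : Matrix ι' κ' R) :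
    ∑ i, ∑ j, ∑ k, ∑ l, f i k * π i j * ρ k l =
      ∑ i, ∑ k, f i k * (∑ j, π i j) * ∑ l, ρ k l := by
  refine sum_congr rfl fun i _ => ?_
  rw [sum_comm]
  simp only [← mul_sum, ← sum_mul]

theorem sum_mul_mul_eq_sum_mul_col_sums [NonUnitalNonAssocSemiring R]
    (f : κ → κ' → R) (π : Matrix ι κ R) (ρ : Matrix ι' κ' R) :
    ∑ i, ∑ j, ∑ k, ∑ l, f j l * π i j * ρ k l =
      ∑ j, ∑ l, f j l * (∑ i, π i j) * ∑ k, ρ k l := by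
  calc ∑ i, ∑ j, ∑ k, ∑ l, f j l * π i j * ρ k l
      = ∑ j, ∑ i, ∑ l, ∑ k, f j l * π i j * ρ k l := by
        rw [sum_comm]
        exact sum_congr rfl fun j _ => sum_congr rfl fun i _ => sum_comm
    _ = ∑ j, ∑ l, f j l * (∑ i, π i j) * ∑ k, ρ k l :=
        sum_mul_mul_eq_sum_mul_row_sums f π.transpose ρ.transpose

theorem sum_sub_sq_mul_mul [CommRing R]
    (A : Matrix ι ι' R) (B : Matrix κ κ' R) (π : Matrix ι κ R) (ρ : Matrix ι' κ' R) :
    ∑ i, ∑ j, ∑ k, ∑ l, (A i k - B j l) ^ 2 * π i j * ρ k l =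
      (∑ i, ∑ j, ∑ k, ∑ l, A i k ^ 2 * π i j * ρ k l) +
        (∑ i, ∑ j, ∑ k, ∑ l, B j l ^ 2 * π i j * ρ k l) -
        2 * ∑ i, ∑ j, ∑ k, ∑ l, A i k * B j l * π i j * ρ k l := by
  have expand (i j k l) : (A i k - B j l) ^ 2 * π i j * ρ k l =
      A i k ^ 2 * π i j * ρ k l + B j l ^ 2 * π i j * ρ k l -
        2 * (A i k * B j l * π i j * ρ k l) := by
    ring
  simp only [expand, sum_add_distrib, sum_sub_distrib, mul_sum]

theorem gromov_term_quadratic_simplification_general [CommRing R]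
    {h : ι → R} {h' : ι' → R} {g : κ → R} {g' : κ' → R}
    (A : Matrix ι ι' R) (B : Matrix κ κ' R) {π : Matrix ι κ R} {ρ : Matrix ι' κ' R}
    (hπ_row : ∀ i, ∑ j, π i j = h i) (hπ_col : ∀ j, ∑ i, π i j = g j)
    (hρ_row : ∀ k, ∑ l, ρ k l = h' k) (hρ_col : ∀ l, ∑ k, ρ k l = g' l) :
    (∑ i, ∑ j, ∑ k, ∑ l, (A i k - B j l) ^ 2 * π i j * ρ k l =
      (∑ i, ∑ k, A i k ^ 2 * h i * h' k) + (∑ j, ∑ l, B j l ^ 2 * g j * g' l) -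
        2 * ∑ i, ∑ j, ∑ k, ∑ l, A i k * B j l * π i j * ρ k l) ∧
    (∑ i, ∑ j, ∑ k, ∑ l, A i k * B j l * π i j * ρ k l =
      ∑ i, ∑ j, (A * ρ * B.transpose) i j * π i j) := by
  constructor
  · rw [sum_sub_sq_mul_mul, sum_mul_mul_eq_sum_mul_row_sums fun i k => A i k ^ 2,
      sum_mul_mul_eq_sum_mul_col_sums fun j l => B j l ^ 2]
    simp only [hπ_row, hπ_col, hρ_row, hρ_col]
  · simp only [sum_mul_mul_mul_eq_mul_mul_transpose_apply_mul]

end QuarticSums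

/-- quadratic simplification of the Gromov term for `q = 2`:
the quartic tensor contraction decomposes into marginal terms plus a cross term
which equals the Frobenius inner product `⟨C₁ π C₂ᵀ, π⟩`. -/
theorem gromov_term_quadratic_simplification {n m : ℕ}
    (h : Fin n → ℝ) (g : Fin m → ℝ) (hh : IsSimplex h) (hg : IsSimplex g)
    (C1 : Matrix (Fin n) (Fin n) ℝ) (C2 : Matrix (Fin m) (Fin m) ℝ)
    (π : Matrix (Fin n) (Fin m) ℝ) (hπ : π ∈ Couplings h g) :
    (∑ i, ∑ j, ∑ k, ∑ l, (C1 i k - C2 j l) ^ 2 * π i j * π k l =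
      (∑ i, ∑ k, C1 i k ^ 2 * h i * h k) + (∑ j, ∑ l, C2 j l ^ 2 * g j * g l) -
        2 * ∑ i, ∑ j, ∑ k, ∑ l, C1 i k * C2 j l * π i j * π k l) ∧
    (∑ i, ∑ j, ∑ k, ∑ l, C1 i k * C2 j l * π i j * π k l =
      ∑ i, ∑ j, (C1 * π * C2.transpose) i j * π i j) := by
  obtain ⟨-, row_sums, col_sums⟩ := hπ
  exact gromov_term_quadratic_simplification_general C1 C2 row_sums col_sums row_sums col_sums
end
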